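/- (Proposition 1, part i.) Suppose there exists c̄ < 1/2 with c(x) ≤ c̄ for all x ∈ X. Then any measurable classifier h : X → {−1, 1} that globally minimizes the noisy 0–1 risk R̃ over all measurable classifiers satisfies Q({x : h(x) ≠ sgn(f_S(x))}) = 0; that is, the adversary exactly extracts the server's model. -/

import Mathlib

open MeasureTheory ENNReal

/-- The sign function: `sgn u = 1` if `u ≥ 0`, and `-1` otherwise. -/
noncomputable def sgn (u : ℝ) : ℝ := if 0 ≤ u then 1 else -1

/-- The noisy 0–1 risk of a classifier `h` against the server's classifier `fS` under the
uniformly flipping defense with noise function `c`: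
`R̃(h) = ∫ [(1 − c x)·1{h x ≠ sgn (fS x)} + c x·1{h x = sgn (fS x)}] dQ`. -/
noncomputable def noisyRisk {X : Type*} [MeasurableSpace X] (Q : Measure X)
    (fS : X → ℝ) (c : X → ℝ) (h : X → ℝ) : ℝ :=
  ∫ x, ((1 - c x) * (if h x ≠ sgn (fS x) then (1 : ℝ) else 0)
    + c x * (if h x = sgn (fS x) then (1 : ℝ) else 0)) ∂Q

/-!
The integrand of the noisy risk is `c` where `h` agrees with the server and `1 - c = c + (1 - 2c)`
where it does not, so `h` pays exactly `∫_{h ≠ sgn ∘ f_S} (1 - 2c) dQ` more than the server's own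
classifier. A minimizer pays nothing more, while `1 - 2c` is positive: the disagreement set is null.
-/

lemma measurable_sgn : Measurable sgn :=
  Measurable.ite measurableSet_Ici measurable_const measurable_const

lemma sgn_eq_one_or_eq_neg_one (u : ℝ) : sgn u = 1 ∨ sgn u = -1 :=
  ite_eq_or_eq _ _ _

lemma measure_eq_zero_of_ae_pos_of_integral_nonpos {α : Type*} [MeasurableSpace α] {μ : Measure α}
    {f : α → ℝ} (hf : Integrable f μ) (hpos : ∀ᵐ x ∂μ, 0 < f x) (hint : ∫ x, f x ∂μ ≤ 0) :
    μ = 0 := by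
  have hnonneg : 0 ≤ᵐ[μ] f := hpos.mono fun _ => le_of_lt
  have hzero : f =ᵐ[μ] 0 :=
    (integral_eq_zero_iff_of_nonneg_ae hnonneg hf).1 (hint.antisymm (integral_nonneg_of_ae hnonneg))
  rw [← ae_eq_bot, ← Filter.eventually_false_iff_eq_bot]
  filter_upwards [hpos, hzero] with x hx hx0
  exact hx.ne' hx0

section Risk

variable {X : Type*} [MeasurableSpace X] {Q : Measure X} {fS c h : X → ℝ}

lemma noisyRisk_sgn : noisyRisk Q fS c (fun x => sgn (fS x)) = ∫ x, c x ∂Q := by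
  simp [noisyRisk]

lemma noisyRisk_eq_integral_add_setIntegral [IsFiniteMeasure Q] (hc : Integrable c Q)
    (hD : NullMeasurableSet {x | h x ≠ sgn (fS x)} Q) :
    noisyRisk Q fS c h = ∫ x, c x ∂Q + ∫ x in {x | h x ≠ sgn (fS x)}, (1 - 2 * c x) ∂Q := by
  have hexcess : Integrable (fun x => 1 - 2 * c x) Q := (integrable_const 1).sub (hc.const_mul 2)
  rw [← integral_indicator₀ hD, ← integral_add hc (hexcess.indicator₀ hD)]
  refine integral_congr_ae (ae_of_all Q fun x => ?_)
  by_cases hx : h x = sgn (fS x)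
  · simp [hx]
  · simp only [ne_eq, hx, not_false_eq_true, if_true, if_false, Set.indicator, Set.mem_ofPred_eq]
    ring

theorem minimizer_extracts_model_general [IsFiniteMeasure Q] (hfS : AEMeasurable fS Q)
    (hc : Integrable c Q) (hc_lt : ∀ᵐ x ∂Q, c x < 1 / 2) (hh : AEMeasurable h Q)
    (hle : noisyRisk Q fS c h ≤ noisyRisk Q fS c fun x => sgn (fS x)) :
    Q {x | h x ≠ sgn (fS x)} = 0 := by
  have hD : NullMeasurableSet {x | h x ≠ sgn (fS x)} Q :=
    (nullMeasurableSet_eq_fun hh (measurable_sgn.comp_aemeasurable hfS)).compl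
  have hexcess : Integrable (fun x => 1 - 2 * c x) Q := (integrable_const 1).sub (hc.const_mul 2)
  have hexcess_pos : ∀ᵐ x ∂Q, 0 < 1 - 2 * c x := by
    filter_upwards [hc_lt] with x hx
    linarith
  have hexcess_nonpos : ∫ x in {x | h x ≠ sgn (fS x)}, (1 - 2 * c x) ∂Q ≤ 0 := by
    rw [noisyRisk_sgn, noisyRisk_eq_integral_add_setIntegral hc hD] at hle
    linarith
  exact Measure.restrict_eq_zero.1 <| measure_eq_zero_of_ae_pos_of_integral_nonpos
    hexcess.integrableOn (ae_restrict_of_ae hexcess_pos) hexcess_nonpos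

end Risk

/-- (Proposition 1, part i.) If the flipping probability is uniformly bounded above by some
`c̄ < 1/2`, then any measurable classifier minimizing the noisy 0–1 risk over all measurable
classifiers disagrees with `sgn ∘ f_S` with `Q`-probability zero: the adversary exactly
extracts the server's model. -/
theorem minimizer_extracts_model {X : Type*} [MeasurableSpace X]
    (Q : Measure X) [IsProbabilityMeasure Q]
    (fS : X → ℝ) (hfS : Measurable fS)
    (c : X → ℝ) (hc : Measurable c) (hc01 : ∀ x, c x ∈ Set.Icc (0 : ℝ) 1)
    (cbar : ℝ) (hcbar : cbar < 1 / 2) (hcle : ∀ x, c x ≤ cbar)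
    (h : X → ℝ) (hh : Measurable h) (hhpm : ∀ x, h x = 1 ∨ h x = -1)
    (hmin : ∀ g : X → ℝ, Measurable g → (∀ x, g x = 1 ∨ g x = -1) →
      noisyRisk Q fS c h ≤ noisyRisk Q fS c g) :
    Q {x | h x ≠ sgn (fS x)} = 0 :=
  minimizer_extracts_model_general hfS.aemeasurable
    (.of_mem_Icc 0 1 hc.aemeasurable (ae_of_all Q hc01))
    (ae_of_all Q fun x => (hcle x).trans_lt hcbar) hh.aemeasurable
    (hmin _ (measurable_sgn.comp hfS) fun x => sgn_eq_one_or_eq_neg_one (fS x))
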